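/- Let R be an alternative ring containing a nontrivial idempotent e₁ satisfying conditions (i) and (ii), and let D : R → R be a Lie triple derivable map. Then for any a₁₁ ∈ R₁₁ and any b ∈ R₁₂ ∪ R₂₁, there exists z ∈ Z(R) such that D(a₁₁ + b) = D(a₁₁) + D(b) + z. -/

import Mathlib

/-- The Lie bracket (commutator) in a not-necessarily-associative ring. -/
def lieBr {R : Type*} [NonUnitalNonAssocRing R] (x y : R) : R := x * y - y * x

/-- `R` is an alternative ring: `(x*x)*y = x*(x*y)` and `(y*x)*x = y*(x*x)`. -/
def IsAlternative (R : Type*) [NonUnitalNonAssocRing R] : Prop :=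
  (∀ x y : R, x * x * y = x * (x * y)) ∧ (∀ x y : R, y * x * x = y * (x * x))

/-- The centre of a not-necessarily-associative ring: elements `r` whose associators
`(r,x,y)`, `(x,r,y)`, `(x,y,r)` all vanish and which commute with everything. -/
def ringCenter (R : Type*) [NonUnitalNonAssocRing R] : Set R :=
  {r | (∀ x y : R, r * x * y = r * (x * y)) ∧ (∀ x y : R, x * r * y = x * (r * y)) ∧
       (∀ x y : R, x * y * r = x * (y * r)) ∧ (∀ x : R, r * x = x * r)}

/-- `e` is a nontrivial idempotent: idempotent, nonzero and not a multiplicative identity. -/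
def IsNontrivialIdempotent {R : Type*} [NonUnitalNonAssocRing R] (e : R) : Prop :=
  e * e = e ∧ e ≠ 0 ∧ ¬ (∀ x : R, e * x = x ∧ x * e = x)

/-- Peirce component `R₁₁` relative to the idempotent `e`. -/
def peirce11 {R : Type*} [NonUnitalNonAssocRing R] (e : R) : Set R :=
  {x | e * x = x ∧ x * e = x}

/-- Peirce component `R₁₂` relative to the idempotent `e`. -/
def peirce12 {R : Type*} [NonUnitalNonAssocRing R] (e : R) : Set R :=
  {x | e * x = x ∧ x * e = 0}

/-- Peirce component `R₂₁` relative to the idempotent `e`. -/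
def peirce21 {R : Type*} [NonUnitalNonAssocRing R] (e : R) : Set R :=
  {x | e * x = 0 ∧ x * e = x}

/-- Peirce component `R₂₂` relative to the idempotent `e`. -/
def peirce22 {R : Type*} [NonUnitalNonAssocRing R] (e : R) : Set R :=
  {x | e * x = 0 ∧ x * e = 0}

/-- Condition (i): if `a₁₁ + a₂₂` commutes with every element of `R₁₂`, it is central. -/
def CondI {R : Type*} [NonUnitalNonAssocRing R] (e : R) : Prop :=
  ∀ a b : R, a ∈ peirce11 e → b ∈ peirce22 e →
    (∀ m ∈ peirce12 e, lieBr (a + b) m = 0) → a + b ∈ ringCenter R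

/-- Condition (ii): if `a₁₁ + a₂₂` commutes with every element of `R₂₁`, it is central. -/
def CondII {R : Type*} [NonUnitalNonAssocRing R] (e : R) : Prop :=
  ∀ a b : R, a ∈ peirce11 e → b ∈ peirce22 e →
    (∀ m ∈ peirce21 e, lieBr (a + b) m = 0) → a + b ∈ ringCenter R

/-- A map `φ` is Lie multiplicative if `φ [x,y] = [φ x, φ y]`. -/
def IsLieMultiplicative {R R' : Type*} [NonUnitalNonAssocRing R] [NonUnitalNonAssocRing R']
    (φ : R → R') : Prop :=
  ∀ x y : R, φ (lieBr x y) = lieBr (φ x) (φ y)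

/-- A map `D` is Lie triple derivable if
`D [[x,y],z] = [[D x,y],z] + [[x,D y],z] + [[x,y],D z]`. -/
def IsLieTripleDerivable {R : Type*} [NonUnitalNonAssocRing R] (D : R → R) : Prop :=
  ∀ x y z : R, D (lieBr (lieBr x y) z) =
    lieBr (lieBr (D x) y) z + lieBr (lieBr x (D y)) z + lieBr (lieBr x y) (D z)

/-- A map `D` is Lie derivable if `D [x,y] = [D x, y] + [x, D y]`. -/
def IsLieDerivable {R : Type*} [NonUnitalNonAssocRing R] (D : R → R) : Prop :=
  ∀ x y : R, D (lieBr x y) = lieBr (D x) y + lieBr x (D y)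

/-- `I` is a two-sided ideal (as a set) of the not-necessarily-associative ring `R`. -/
def IsTwoSidedIdealSet {R : Type*} [NonUnitalNonAssocRing R] (I : Set R) : Prop :=
  (0 : R) ∈ I ∧ (∀ a b : R, a ∈ I → b ∈ I → a + b ∈ I) ∧ (∀ a : R, a ∈ I → -a ∈ I) ∧
  (∀ r a : R, a ∈ I → r * a ∈ I ∧ a * r ∈ I)

/-- `R` is prime: for any two nonzero two-sided ideals `A`, `B`, some product `a*b` with
`a ∈ A`, `b ∈ B` is nonzero (i.e. `A·B ≠ 0`). -/
def IsPrimeRing (R : Type*) [NonUnitalNonAssocRing R] : Prop :=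
  ∀ A B : Set R, IsTwoSidedIdealSet A → IsTwoSidedIdealSet B → A ≠ {0} → B ≠ {0} →
    ∃ a ∈ A, ∃ b ∈ B, a * b ≠ 0

/-- `R` is 3-torsion free: `3x = 0` implies `x = 0`. -/
def ThreeTorsionFree (R : Type*) [NonUnitalNonAssocRing R] : Prop :=
  ∀ x : R, x + x + x = 0 → x = 0

/-
For a diagonal element `a` and an off-diagonal element `b`, let `t = D (a + b) - D a - D b`, which
is `polar D a b`, be the defect of additivity. Since `D` is Lie triple derivable, `[[t, y], z]` is
the defect of `D` at `[[a, y], z]` and `[[b, y], z]`, so it vanishes as soon as one of these two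
double brackets does. Taking `y = z = e` gives `[[t, e], e] = 0`, which forces `[t, e] = 0`, so `t`
is diagonal. Taking `y = m` in the Peirce component opposite to that of `b` and `z = e` gives
`[[t, m], e] = 0`; but `[·, e]` acts as `±1` on `[t, m]`, so `t` commutes with `m`, and the
condition on `R₁₂` or `R₂₁` makes `t` central.

The brackets with `e` are computed by the Jacobi identity, which in an alternative ring fails by
six times an associator; every associator involved here vanishes.
-/

open QuadraticMap (polar)

section NonAssoc

variable {R : Type*} [NonUnitalNonAssocRing R]

theorem associator_add_left (x y z w : R) :
    associator (x + y) z w = associator x z w + associator y z w := by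
  simp only [← AddMonoidHom.associator_apply, map_add, AddMonoidHom.add_apply]

@[simp]
theorem lieBr_zero_left (x : R) : lieBr 0 x = 0 := by simp [lieBr]

theorem neg_lieBr (x y : R) : -lieBr x y = lieBr y x := by
  rw [lieBr, lieBr, neg_sub]

theorem lieBr_neg_left (x y : R) : lieBr (-x) y = -lieBr x y := by
  simp only [lieBr, neg_mul, mul_neg]; abel

theorem lieBr_neg_right (x y : R) : lieBr x (-y) = -lieBr x y := by
  simp only [lieBr, neg_mul, mul_neg]; abel

theorem IsLieTripleDerivable.map_zero {D : R → R} (hD : IsLieTripleDerivable D) : D 0 = 0 := by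
  simpa [lieBr] using hD 0 0 0

theorem IsLieTripleDerivable.lieBr_lieBr_polar {D : R → R} (hD : IsLieTripleDerivable D)
    (a b y z : R) :
    lieBr (lieBr (polar D a b) y) z =
      polar D (lieBr (lieBr a y) z) (lieBr (lieBr b y) z) := by
  have bracket_add : lieBr (lieBr a y) z + lieBr (lieBr b y) z = lieBr (lieBr (a + b) y) z := by
    simp only [lieBr, add_mul, mul_add, sub_mul, mul_sub]; abel
  rw [polar, polar, bracket_add, hD, hD, hD]
  simp only [lieBr, add_mul, mul_add, sub_mul, mul_sub]
  abel

theorem IsLieTripleDerivable.lieBr_lieBr_polar_eq_zero {D : R → R} (hD : IsLieTripleDerivable D)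
    {a b y z : R} (h : lieBr (lieBr a y) z = 0 ∨ lieBr (lieBr b y) z = 0) :
    lieBr (lieBr (polar D a b) y) z = 0 := by
  rw [hD.lieBr_lieBr_polar]
  rcases h with h | h <;> simp [h, polar, hD.map_zero]

variable {e m : R}

theorem lieBr_of_mem_peirce11 (hm : m ∈ peirce11 e) : lieBr m e = 0 := by
  rw [lieBr, hm.1, hm.2, sub_self]

theorem lieBr_of_mem_peirce12 (hm : m ∈ peirce12 e) : lieBr m e = -m := by
  rw [lieBr, hm.1, hm.2, zero_sub]

theorem lieBr_of_mem_peirce21 (hm : m ∈ peirce21 e) : lieBr m e = m := by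
  rw [lieBr, hm.1, hm.2, sub_zero]

end NonAssoc

namespace IsAlternative

variable {R : Type*} [NonUnitalNonAssocRing R]

theorem associator_self_left (hR : IsAlternative R) (x y : R) : associator x x y = 0 :=
  sub_eq_zero.2 (hR.1 x y)

theorem associator_self_right (hR : IsAlternative R) (x y : R) : associator x y y = 0 :=
  sub_eq_zero.2 (hR.2 y x)

theorem associator_swap_left (hR : IsAlternative R) (x y z : R) :
    associator y x z = -associator x y z := by
  have polarized := hR.associator_self_left (x + y) z
  have expansion : associator (x + y) (x + y) z =
      associator x x z + associator x y z + (associator y x z + associator y y z) := by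
    simp only [← AddMonoidHom.associator_apply, map_add, AddMonoidHom.add_apply]
    abel
  rw [expansion, hR.associator_self_left, hR.associator_self_left, zero_add, add_zero] at polarized
  exact eq_neg_of_add_eq_zero_right polarized

theorem associator_swap_right (hR : IsAlternative R) (x y z : R) :
    associator x z y = -associator x y z := by
  have polarized := hR.associator_self_right x (y + z)
  have expansion : associator x (y + z) (y + z) =
      associator x y y + associator x y z + (associator x z y + associator x z z) := by
    simp only [← AddMonoidHom.associator_apply, map_add, AddMonoidHom.add_apply]
    abel
  rw [expansion, hR.associator_self_right, hR.associator_self_right, zero_add,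
    add_zero] at polarized
  exact eq_neg_of_add_eq_zero_right polarized

theorem associator_rotate (hR : IsAlternative R) (x y z : R) :
    associator y z x = associator x y z := by
  rw [hR.associator_swap_right y x z, hR.associator_swap_left x y z, neg_neg]

theorem flexible (hR : IsAlternative R) (x y : R) : x * y * x = x * (y * x) := by
  have vanish : associator x y x = 0 := by
    rw [hR.associator_swap_right, hR.associator_self_left, neg_zero]
  exact sub_eq_zero.1 vanish

theorem lieBr_lieBr (hR : IsAlternative R) (x y z : R) :
    lieBr (lieBr x y) z =
      lieBr (lieBr x z) y + lieBr x (lieBr y z) + 6 • associator x y z := by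
  have jacobian : lieBr (lieBr x y) z - lieBr (lieBr x z) y - lieBr x (lieBr y z) =
      associator x y z + associator y z x + associator z x y
        - associator y x z - associator x z y - associator z y x := by
    simp only [lieBr, associator_apply, sub_mul, mul_sub]; abel
  have reversed : associator z y x = -associator x y z := by
    rw [hR.associator_swap_left, hR.associator_rotate]
  rw [hR.associator_rotate x y z, ← hR.associator_rotate z x y, hR.associator_swap_left x y z,
    hR.associator_swap_right x y z, reversed, sub_sub, sub_eq_iff_eq_add] at jacobian
  rw [jacobian]
  abel

theorem lieBr_lieBr_of_associator_eq_zero (hR : IsAlternative R) {x y z : R}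
    (h : associator x y z = 0) :
    lieBr (lieBr x y) z = lieBr (lieBr x z) y + lieBr x (lieBr y z) := by
  rw [hR.lieBr_lieBr, h, smul_zero, add_zero]

variable {e t m b : R}

theorem idempotent_mul_mul (hR : IsAlternative R) (he : IsIdempotentElem e) (x : R) :
    e * (e * x) = e * x := by
  rw [← hR.1, he]

theorem mul_mul_idempotent (hR : IsAlternative R) (he : IsIdempotentElem e) (x : R) :
    x * e * e = x * e := by
  rw [hR.2, he]

theorem lieBr_lieBr_lieBr_idempotent (hR : IsAlternative R) (he : IsIdempotentElem e) (x : R) :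
    lieBr (lieBr (lieBr x e) e) e = lieBr x e := by
  simp only [lieBr, sub_mul, mul_sub, hR.idempotent_mul_mul he, hR.mul_mul_idempotent he,
    hR.flexible]
  abel

theorem lieBr_eq_zero_of_lieBr_lieBr_eq_zero (hR : IsAlternative R) (he : IsIdempotentElem e)
    (h : lieBr (lieBr t e) e = 0) : lieBr t e = 0 := by
  rw [← hR.lieBr_lieBr_lieBr_idempotent he, h, lieBr_zero_left]

theorem idempotent_mul_mem_peirce11 (hR : IsAlternative R) (he : IsIdempotentElem e)
    (ht : lieBr t e = 0) : e * t ∈ peirce11 e :=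
  ⟨hR.idempotent_mul_mul he t, by rw [hR.flexible, sub_eq_zero.1 ht, hR.idempotent_mul_mul he]⟩

theorem sub_idempotent_mul_mem_peirce22 (hR : IsAlternative R) (he : IsIdempotentElem e)
    (ht : lieBr t e = 0) : t - e * t ∈ peirce22 e := by
  obtain ⟨left, right⟩ := hR.idempotent_mul_mem_peirce11 he ht
  exact ⟨by rw [mul_sub, left, sub_self], by rw [sub_mul, right, sub_eq_zero.1 ht, sub_self]⟩

theorem associator_eq_zero_of_mem_peirce12 (hR : IsAlternative R) (he : IsIdempotentElem e)
    (ht : lieBr t e = 0) (hm : m ∈ peirce12 e) : associator t m e = 0 := by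
  have h11 : associator (e * t) m e = 0 := by
    rw [hR.associator_swap_right, associator_apply, (hR.idempotent_mul_mem_peirce11 he ht).2, hm.1,
      sub_self, neg_zero]
  have h22 : associator (t - e * t) m e = 0 := by
    rw [← hR.associator_rotate, associator_apply, (hR.sub_idempotent_mul_mem_peirce22 he ht).1,
      hm.2, zero_mul, mul_zero, sub_self]
  rw [← add_sub_cancel (e * t) t, associator_add_left, h11, h22, add_zero]

theorem associator_eq_zero_of_mem_peirce21 (hR : IsAlternative R) (he : IsIdempotentElem e)
    (ht : lieBr t e = 0) (hm : m ∈ peirce21 e) : associator t m e = 0 := by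
  have h11 : associator (e * t) m e = 0 := by
    rw [← hR.associator_rotate, associator_apply, (hR.idempotent_mul_mem_peirce11 he ht).1, hm.2,
      sub_self]
  have h22 : associator (t - e * t) m e = 0 := by
    rw [hR.associator_swap_right, associator_apply,
      (hR.sub_idempotent_mul_mem_peirce22 he ht).2, hm.1, zero_mul, mul_zero, sub_self, neg_zero]
  rw [← add_sub_cancel (e * t) t, associator_add_left, h11, h22, add_zero]

theorem lieBr_lieBr_of_mem_peirce12 (hR : IsAlternative R) (he : IsIdempotentElem e)
    (ht : lieBr t e = 0) (hm : m ∈ peirce12 e) : lieBr (lieBr t m) e = -lieBr t m := by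
  rw [hR.lieBr_lieBr_of_associator_eq_zero (hR.associator_eq_zero_of_mem_peirce12 he ht hm), ht,
    lieBr_of_mem_peirce12 hm, lieBr_zero_left, lieBr_neg_right, zero_add]

theorem lieBr_lieBr_of_mem_peirce21 (hR : IsAlternative R) (he : IsIdempotentElem e)
    (ht : lieBr t e = 0) (hm : m ∈ peirce21 e) : lieBr (lieBr t m) e = lieBr t m := by
  rw [hR.lieBr_lieBr_of_associator_eq_zero (hR.associator_eq_zero_of_mem_peirce21 he ht hm), ht,
    lieBr_of_mem_peirce21 hm, lieBr_zero_left, zero_add]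

theorem lieBr_lieBr_peirce12_peirce21 (hR : IsAlternative R) (hb : b ∈ peirce12 e)
    (hm : m ∈ peirce21 e) : lieBr (lieBr b m) e = 0 := by
  have vanish : associator b m e = 0 := by
    rw [hR.associator_swap_right, associator_apply, hb.2, hm.1, zero_mul, mul_zero, sub_self,
      neg_zero]
  rw [hR.lieBr_lieBr_of_associator_eq_zero vanish, lieBr_of_mem_peirce12 hb,
    lieBr_of_mem_peirce21 hm, lieBr_neg_left, neg_add_cancel]

theorem lieBr_lieBr_peirce21_peirce12 (hR : IsAlternative R) (hb : b ∈ peirce21 e)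
    (hm : m ∈ peirce12 e) : lieBr (lieBr b m) e = 0 := by
  rw [← neg_lieBr m b, lieBr_neg_left, hR.lieBr_lieBr_peirce12_peirce21 hm hb, neg_zero]

end IsAlternative

section Additivity

variable {R : Type*} [NonUnitalNonAssocRing R] {D : R → R} {e a b t : R}

theorem CondI.mem_ringCenter (hi : CondI e) (hR : IsAlternative R) (he : IsIdempotentElem e)
    (ht : lieBr t e = 0) (hcomm : ∀ m ∈ peirce12 e, lieBr t m = 0) : t ∈ ringCenter R := by
  rw [← add_sub_cancel (e * t) t] at hcomm ⊢
  exact hi _ _ (hR.idempotent_mul_mem_peirce11 he ht)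
    (hR.sub_idempotent_mul_mem_peirce22 he ht) hcomm

theorem CondII.mem_ringCenter (hii : CondII e) (hR : IsAlternative R) (he : IsIdempotentElem e)
    (ht : lieBr t e = 0) (hcomm : ∀ m ∈ peirce21 e, lieBr t m = 0) : t ∈ ringCenter R := by
  rw [← add_sub_cancel (e * t) t] at hcomm ⊢
  exact hii _ _ (hR.idempotent_mul_mem_peirce11 he ht)
    (hR.sub_idempotent_mul_mem_peirce22 he ht) hcomm

theorem IsLieTripleDerivable.lieBr_polar_eq_zero (hD : IsLieTripleDerivable D)
    (hR : IsAlternative R) (he : IsIdempotentElem e) (ha : lieBr a e = 0) (b : R) :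
    lieBr (polar D a b) e = 0 := by
  refine hR.lieBr_eq_zero_of_lieBr_lieBr_eq_zero he (hD.lieBr_lieBr_polar_eq_zero (.inl ?_))
  rw [ha, lieBr_zero_left]

theorem IsLieTripleDerivable.polar_mem_ringCenter_of_mem_peirce12 (hD : IsLieTripleDerivable D)
    (hR : IsAlternative R) (he : IsIdempotentElem e) (hii : CondII e) (ha : lieBr a e = 0)
    (hb : b ∈ peirce12 e) : polar D a b ∈ ringCenter R := by
  have diagonal : lieBr (polar D a b) e = 0 := hD.lieBr_polar_eq_zero hR he ha b
  refine hii.mem_ringCenter hR he diagonal fun m hm ↦ ?_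
  rw [← hR.lieBr_lieBr_of_mem_peirce21 he diagonal hm]
  exact hD.lieBr_lieBr_polar_eq_zero (.inr (hR.lieBr_lieBr_peirce12_peirce21 hb hm))

theorem IsLieTripleDerivable.polar_mem_ringCenter_of_mem_peirce21 (hD : IsLieTripleDerivable D)
    (hR : IsAlternative R) (he : IsIdempotentElem e) (hi : CondI e) (ha : lieBr a e = 0)
    (hb : b ∈ peirce21 e) : polar D a b ∈ ringCenter R := by
  have diagonal : lieBr (polar D a b) e = 0 := hD.lieBr_polar_eq_zero hR he ha b
  refine hi.mem_ringCenter hR he diagonal fun m hm ↦ ?_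
  rw [← neg_eq_zero, ← hR.lieBr_lieBr_of_mem_peirce12 he diagonal hm]
  exact hD.lieBr_lieBr_polar_eq_zero (.inr (hR.lieBr_lieBr_peirce21_peirce12 hb hm))

theorem lieTripleDer_add_11_offdiag_general (hR : IsAlternative R) (he : IsIdempotentElem e)
    (hi : CondI e) (hii : CondII e) (hD : IsLieTripleDerivable D) (ha : lieBr a e = 0)
    (hb : b ∈ peirce12 e ∪ peirce21 e) : ∃ z ∈ ringCenter R, D (a + b) = D a + D b + z := by
  refine ⟨polar D a b, ?_, QuadraticMap.map_add D a b⟩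
  rcases hb with hb | hb
  · exact hD.polar_mem_ringCenter_of_mem_peirce12 hR he hii ha hb
  · exact hD.polar_mem_ringCenter_of_mem_peirce21 hR he hi ha hb

end Additivity

theorem lieTripleDer_add_11_offdiag
    {R : Type*} [NonUnitalNonAssocRing R] (hR : IsAlternative R)
    (e : R) (he : IsNontrivialIdempotent e) (hi : CondI e) (hii : CondII e)
    (D : R → R) (hD : IsLieTripleDerivable D) :
    ∀ a b : R, a ∈ peirce11 e → b ∈ peirce12 e ∪ peirce21 e →
      ∃ z ∈ ringCenter R, D (a + b) = D a + D b + z :=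
  fun _ _ ha hb ↦
    lieTripleDer_add_11_offdiag_general hR he.1 hi hii hD (lieBr_of_mem_peirce11 ha) hb
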